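/- Let k : [0,∞) → ℝ be a càdlàg function with k_0 = 0 and let X be the process X_t = Y_t + k_t. Set y_t = E[Y_t] and x_t = y_t + k_t. Then (X, k) is a solution of the Skorokhod problem with mean minimality condition and two constraints associated with (h, Y, l, u) if and only if (x, k) is a solution of the deterministic Skorokhod problem SP_{l̄}^{ū}(y). -/

import Mathlib

open MeasureTheory Filter Set Function Topology

noncomputable section

/-- A function with values in a topological space is càdlàg on `[0,∞)`:
right-continuous at every `t ≥ 0` and admitting a left limit at every `t > 0`. -/
def CadlagOn {E : Type*} [TopologicalSpace E] (f : ℝ → E) : Prop :=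
  (∀ t : ℝ, 0 ≤ t → ContinuousWithinAt f (Set.Ici t) t) ∧
  ∀ t : ℝ, 0 < t → ∃ L : E, Filter.Tendsto f (nhdsWithin t (Set.Iio t)) (nhds L)

/-- Condition (H) on `h : [0,∞) × ℝ → ℝ` with constants `Mh, Lh, ch, Ch`. -/
structure CondH (h : ℝ → ℝ → ℝ) (Mh Lh ch Ch : ℝ) : Prop where
  meas : Measurable (Function.uncurry h)
  Mh_pos : 0 < Mh
  Lh_pos : 0 < Lh
  ch_pos : 0 < ch
  Ch_pos : 0 < Ch
  growth : ∀ t x : ℝ, 0 ≤ t → |h t x| ≤ Mh * (1 + |x|)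
  strict_mono : ∀ t : ℝ, 0 ≤ t → StrictMono (h t)
  lip_time : ∀ s t x : ℝ, 0 ≤ s → 0 ≤ t → |h t x - h s x| ≤ Lh * |t - s|
  lip_lower : ∀ t x y : ℝ, 0 ≤ t → ch * |x - y| ≤ |h t x - h t y|
  lip_upper : ∀ t x y : ℝ, 0 ≤ t → |h t x - h t y| ≤ Ch * |x - y|

/-- A process with càdlàg paths, integrable values, and values uniformly integrable
on every compact time interval. -/
structure NiceProcess {Ω : Type*} [MeasurableSpace Ω] (μ : Measure Ω) (Y : ℝ → Ω → ℝ) : Prop where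
  cadlag : ∀ ω, CadlagOn fun t => Y t ω
  integrable : ∀ t : ℝ, 0 ≤ t → Integrable (Y t) μ
  unifInt : ∀ q : ℝ, 0 ≤ q → UniformIntegrable (fun t : Set.Icc (0:ℝ) q => Y t.1) 1 μ

/-- Solution of the Skorokhod problem with mean minimality condition and two constraints
associated with `(h, Y, l, u)`. -/
def MeanSP {Ω : Type*} [MeasurableSpace Ω] (μ : Measure Ω) (h : ℝ → ℝ → ℝ)
    (Y : ℝ → Ω → ℝ) (l u : ℝ → ℝ) (X : ℝ → Ω → ℝ) (k : ℝ → ℝ) : Prop :=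
  (∀ ω, CadlagOn fun t => X t ω) ∧ CadlagOn k ∧ k 0 = 0 ∧
  (∀ t : ℝ, 0 ≤ t → ∀ ω, X t ω = Y t ω + k t) ∧
  (∀ t : ℝ, 0 ≤ t → (∫ ω, h t (X t ω) ∂μ) ∈ Set.Icc (l t) (u t)) ∧
  (∀ t q : ℝ, 0 ≤ t → t ≤ q →
    ((∀ s : ℝ, t < s → s ≤ q → (∫ ω, h s (X s ω) ∂μ) < u s) → 0 ≤ k q - k t) ∧
    ((∀ s : ℝ, t < s → s ≤ q → l s < ∫ ω, h s (X s ω) ∂μ) → k q - k t ≤ 0)) ∧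
  ∀ t : ℝ, 0 < t →
    ((∫ ω, h t (X t ω) ∂μ) < u t → 0 ≤ k t - Function.leftLim k t) ∧
    (l t < ∫ ω, h t (X t ω) ∂μ → k t - Function.leftLim k t ≤ 0)

/-- Solution of the deterministic Skorokhod problem with two time-dependent barriers. -/
def DetSP (y lb ub x k : ℝ → ℝ) : Prop :=
  CadlagOn x ∧ CadlagOn k ∧ k 0 = 0 ∧
  (∀ t : ℝ, 0 ≤ t → x t = y t + k t ∧ x t ∈ Set.Icc (lb t) (ub t)) ∧
  (∀ t q : ℝ, 0 ≤ t → t ≤ q →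
    ((∀ s : ℝ, t < s → s ≤ q → x s < ub s) → 0 ≤ k q - k t) ∧
    ((∀ s : ℝ, t < s → s ≤ q → lb s < x s) → k q - k t ≤ 0)) ∧
  ∀ t : ℝ, 0 < t →
    (x t < ub t → 0 ≤ k t - Function.leftLim k t) ∧
    (lb t < x t → k t - Function.leftLim k t ≤ 0)

/-- Solution of the Skorokhod problem with mean minimality condition and a single
lower barrier `l`.  The minimality condition `∫ (E[h(s,X_s)] - l_s) dk_s = 0` is expressed
through any measure `ν` that agrees with the Lebesgue–Stieltjes measure of `k` on `[0,∞)`. -/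
def MeanSPLower {Ω : Type*} [MeasurableSpace Ω] (μ : Measure Ω) (h : ℝ → ℝ → ℝ)
    (Y : ℝ → Ω → ℝ) (l : ℝ → ℝ) (X : ℝ → Ω → ℝ) (k : ℝ → ℝ) : Prop :=
  (∀ ω, CadlagOn fun t => X t ω) ∧ CadlagOn k ∧ k 0 = 0 ∧
  (∀ t : ℝ, 0 ≤ t → ∀ ω, X t ω = Y t ω + k t) ∧
  (∀ t : ℝ, 0 ≤ t → l t ≤ ∫ ω, h t (X t ω) ∂μ) ∧
  MonotoneOn k (Set.Ici 0) ∧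
  ∀ ν : Measure ℝ,
    (∀ a b : ℝ, 0 ≤ a → a ≤ b → ν (Set.Ioc a b) = ENNReal.ofReal (k b - k a)) →
    ν {0} = 0 →
    ∀ t : ℝ, 0 ≤ t → (∫ s in Set.Icc 0 t, ((∫ ω, h s (X s ω) ∂μ) - l s) ∂ν) = 0

/-- Solution of the Skorokhod problem with mean minimality condition and a single
upper barrier `u`.  The minimality condition `∫ (u_s - E[h(s,X_s)]) d(-k)_s = 0` is expressed
through any measure `ν` that agrees with the Lebesgue–Stieltjes measure of `-k` on `[0,∞)`. -/
def MeanSPUpper {Ω : Type*} [MeasurableSpace Ω] (μ : Measure Ω) (h : ℝ → ℝ → ℝ)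
    (Y : ℝ → Ω → ℝ) (u : ℝ → ℝ) (X : ℝ → Ω → ℝ) (k : ℝ → ℝ) : Prop :=
  (∀ ω, CadlagOn fun t => X t ω) ∧ CadlagOn k ∧ k 0 = 0 ∧
  (∀ t : ℝ, 0 ≤ t → ∀ ω, X t ω = Y t ω + k t) ∧
  (∀ t : ℝ, 0 ≤ t → (∫ ω, h t (X t ω) ∂μ) ≤ u t) ∧
  AntitoneOn k (Set.Ici 0) ∧
  ∀ ν : Measure ℝ,
    (∀ a b : ℝ, 0 ≤ a → a ≤ b → ν (Set.Ioc a b) = ENNReal.ofReal (k a - k b)) →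
    ν {0} = 0 →
    ∀ t : ℝ, 0 ≤ t → (∫ s in Set.Icc 0 t, (u s - ∫ ω, h s (X s ω) ∂μ) ∂ν) = 0

/-- `OscN x η q` is the number of `η`-oscillations of `x` on `[0,q]`: the largest `m`
for which there are `0 ≤ t₁ ≤ t₂ ≤ ⋯ ≤ t_{2m} ≤ q` with `|x(t_{2i}) - x(t_{2i-1})| > η`. -/
def OscN (x : ℝ → ℝ) (η q : ℝ) : ℕ :=
  sSup {m : ℕ | ∃ a b : Fin m → ℝ,
    (∀ i, 0 ≤ a i ∧ a i ≤ b i ∧ b i ≤ q) ∧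
    (∀ i j, i < j → b i ≤ a j) ∧
    ∀ i, η < |x (b i) - x (a i)|}

/-- The left limit at `t` of a càdlàg function on `[0,∞)`, with the convention
`x(0-) = x(0)`. -/
def leftLimAt {E : Type*} [TopologicalSpace E] (x : ℝ → E) (t : ℝ) : E :=
  if t = 0 then x 0 else Function.leftLim x t

/-- Convergence `xₙ → x` in the Skorokhod `J₁` topology on `D([0,∞), E)`, expressed via
the sequence characterization used in the paper. -/
def DConvOn {E : Type*} [TopologicalSpace E] (xs : ℕ → ℝ → E) (x : ℝ → E) : Prop :=
  ∀ t : ℝ, 0 ≤ t → ∃ tn : ℕ → ℝ,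
    (∀ n, 0 ≤ tn n) ∧ Filter.Tendsto tn Filter.atTop (nhds t) ∧
    ∀ t' t'' : ℕ → ℝ, (∀ n, 0 ≤ t' n) → (∀ n, 0 ≤ t'' n) →
      Filter.Tendsto t' Filter.atTop (nhds t) → Filter.Tendsto t'' Filter.atTop (nhds t) →
      (∀ n, t' n < tn n ∧ tn n ≤ t'' n) →
      Filter.Tendsto (fun n => xs n (t' n)) Filter.atTop (nhds (leftLimAt x t)) ∧
      Filter.Tendsto (fun n => xs n (t'' n)) Filter.atTop (nhds (x t))

/-!
For fixed `t` the mean `z ↦ E[h(t, Y_t - E[Y_t] + z)]` is strictly increasing. It sends `x_t` to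
`E[h(t, X_t)]`, `l̄_t` to `l_t` and `ū_t` to `u_t`, while the band condition and the minimality
condition see the solution and the barriers only through their order at each time. Hence these
conditions coincide in the two problems. The path regularity of `x` comes from uniform
integrability, through Vitali's convergence theorem along the filters `𝓝[≥] t` and `𝓝[<] t`.
-/

namespace CadlagOn

variable {E : Type*} [TopologicalSpace E] {f g : ℝ → E}

theorem congr (hf : CadlagOn f) (hgf : EqOn g f (Ici 0)) : CadlagOn g := by
  refine ⟨fun t ht => (hf.1 t ht).congr (fun s hs => hgf (ht.trans hs)) (hgf ht), fun t ht => ?_⟩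
  obtain ⟨L, hL⟩ := hf.2 t ht
  refine ⟨L, hL.congr' ?_⟩
  filter_upwards [mem_nhdsWithin_of_mem_nhds (Ici_mem_nhds ht)] with s hs
  exact (hgf hs).symm

theorem add [Add E] [ContinuousAdd E] (hf : CadlagOn f) (hg : CadlagOn g) :
    CadlagOn fun t => f t + g t := by
  refine ⟨fun t ht => (hf.1 t ht).add (hg.1 t ht), fun t ht => ?_⟩
  obtain ⟨L, hL⟩ := hf.2 t ht
  obtain ⟨M, hM⟩ := hg.2 t ht
  exact ⟨L + M, hL.add hM⟩

end CadlagOn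

section Integral

variable {Ω E F : Type*} [MeasurableSpace Ω] {μ : Measure Ω}
  [NormedAddCommGroup E] [NormedAddCommGroup F]

theorem tendsto_integral_of_uniformIntegrable [NormedSpace ℝ E] [IsFiniteMeasure μ] {ι : Type*}
    {u : Filter ι} [u.IsCountablyGenerated] {f : ι → Ω → E} {g : Ω → E}
    (hf : UniformIntegrable f 1 μ) (hfg : ∀ᵐ ω ∂μ, Tendsto (fun i => f i ω) u (𝓝 (g ω))) :
    Tendsto (fun i => ∫ ω, f i ω ∂μ) u (𝓝 (∫ ω, g ω ∂μ)) := by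
  refine tendsto_of_seq_tendsto fun s hs => ?_
  have hfs : UniformIntegrable (fun n => f (s n)) 1 μ := by
    obtain ⟨hmeas, hui, C, hC⟩ := hf
    refine ⟨fun n => hmeas (s n), fun ε hε => ?_, C, fun n => hC (s n)⟩
    obtain ⟨δ, hδ, hsmall⟩ := hui hε
    exact ⟨δ, hδ, fun n => hsmall (s n)⟩
  have hlim : ∀ᵐ ω ∂μ, Tendsto (fun n => f (s n) ω) atTop (𝓝 (g ω)) :=
    hfg.mono fun ω hω => hω.comp hs
  have hg : MemLp g 1 μ := hfs.memLp_of_ae_tendsto hlim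
  exact tendsto_integral_of_L1' g hg.1
    (Eventually.of_forall fun n => memLp_one_iff_integrable.1 (hfs.memLp n))
    (tendsto_Lp_finite_of_tendsto_ae le_rfl ENNReal.one_ne_top hfs.1 hg hfs.2.1 hlim)

theorem tendsto_integral_of_uniformIntegrable_on [NormedSpace ℝ E] [IsFiniteMeasure μ] {ι : Type*}
    {u : Filter ι} [u.IsCountablyGenerated] {s : Set ι} (hs : s ∈ u) {f : ι → Ω → E} {g : Ω → E}
    (hf : UniformIntegrable (fun i : s => f i) 1 μ)
    (hfg : ∀ᵐ ω ∂μ, Tendsto (fun i => f i ω) u (𝓝 (g ω))) :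
    Tendsto (fun i => ∫ ω, f i ω ∂μ) u (𝓝 (∫ ω, g ω ∂μ)) := by
  have hrange : range ((↑) : s → ι) ∈ u := by rwa [Subtype.range_coe]
  exact (tendsto_comap'_iff hrange).1 <| tendsto_integral_of_uniformIntegrable hf <|
    hfg.mono fun ω hω => hω.comp tendsto_comap

theorem cadlagOn_integral [NormedSpace ℝ E] [IsFiniteMeasure μ] {f : ℝ → Ω → E}
    (hf : ∀ᵐ ω ∂μ, CadlagOn fun t => f t ω)
    (hui : ∀ q : ℝ, 0 ≤ q → UniformIntegrable (fun t : Icc 0 q => f t) 1 μ) :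
    CadlagOn fun t => ∫ ω, f t ω ∂μ := by
  refine ⟨fun t ht => ?_, fun t ht => ?_⟩
  · have hmem : Icc 0 (t + 1) ∈ 𝓝[≥] t :=
      mem_of_superset (Icc_mem_nhdsGE (lt_add_one t)) (Icc_subset_Icc_left ht)
    exact tendsto_integral_of_uniformIntegrable_on hmem (hui (t + 1) (by positivity))
      (hf.mono fun ω hω => hω.1 t ht)
  · have hmem : Icc 0 t ∈ 𝓝[<] t :=
      mem_of_superset (Ico_mem_nhdsLT ht) Ico_subset_Icc_self
    exact ⟨∫ ω, limUnder (𝓝[<] t) (fun s => f s ω) ∂μ,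
      tendsto_integral_of_uniformIntegrable_on hmem (hui t ht.le)
        (hf.mono fun ω hω => tendsto_nhds_limUnder (hω.2 t ht))⟩

theorem strictMono_integral [NeZero μ] {ι : Type*} [Preorder ι] {f : ι → Ω → ℝ}
    (hint : ∀ i, Integrable (f i) μ) (hmono : ∀ᵐ ω ∂μ, StrictMono fun i => f i ω) :
    StrictMono fun i => ∫ ω, f i ω ∂μ := by
  intro i j hij
  have hlt : ∀ᵐ ω ∂μ, f i ω < f j ω := hmono.mono fun ω hω => hω hij
  have hle : f i ≤ᵐ[μ] f j := hlt.mono fun ω hω => hω.le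
  refine (integral_mono_ae (hint i) (hint j) hle).lt_of_ne fun heq => ?_
  have heq_ae : f i =ᵐ[μ] f j := (integral_eq_iff_of_ae_le (hint i) (hint j) hle).1 heq
  obtain ⟨ω, hω_lt, hω_eq⟩ := (hlt.and heq_ae).exists
  exact hω_lt.ne hω_eq

theorem integrable_comp_of_norm_le_linear [IsFiniteMeasure μ] [MeasurableSpace E] [BorelSpace E]
    [MeasurableSpace F] [OpensMeasurableSpace F] [SecondCountableTopology F]
    {φ : E → F} (hφ : Measurable φ) {M : ℝ} (hM : ∀ x, ‖φ x‖ ≤ M * (1 + ‖x‖))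
    {Z : Ω → E} (hZ : Integrable Z μ) : Integrable (fun ω => φ (Z ω)) μ :=
  (((integrable_const 1).add hZ.norm).const_mul M).mono'
    (hφ.comp_aemeasurable hZ.aemeasurable).aestronglyMeasurable
    (Eventually.of_forall fun ω => hM (Z ω))

end Integral

theorem CondH.integrable_comp {Ω : Type*} [MeasurableSpace Ω] {μ : Measure Ω} [IsFiniteMeasure μ]
    {h : ℝ → ℝ → ℝ} {Mh Lh ch Ch : ℝ} (hH : CondH h Mh Lh ch Ch) {t : ℝ} (ht : 0 ≤ t)
    {Z : Ω → ℝ} (hZ : Integrable Z μ) : Integrable (fun ω => h t (Z ω)) μ :=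
  integrable_comp_of_norm_le_linear hH.meas.of_uncurry_left (fun z => hH.growth t z ht) hZ

/-- The part of the Skorokhod problem that `MeanSP` and `DetSP` share: the trajectory `z` stays
between the barriers `a ≤ b`, and the regulator `k` increases only while `z` touches `a` and
decreases only while `z` touches `b`. The relation between `z` and `k` is not included. -/
def IsMinimalRegulator (z a b k : ℝ → ℝ) : Prop :=
  (∀ t : ℝ, 0 ≤ t → z t ∈ Icc (a t) (b t)) ∧
  (∀ t q : ℝ, 0 ≤ t → t ≤ q →
    ((∀ s : ℝ, t < s → s ≤ q → z s < b s) → 0 ≤ k q - k t) ∧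
    ((∀ s : ℝ, t < s → s ≤ q → a s < z s) → k q - k t ≤ 0)) ∧
  ∀ t : ℝ, 0 < t →
    (z t < b t → 0 ≤ k t - leftLim k t) ∧ (a t < z t → k t - leftLim k t ≤ 0)

theorem isMinimalRegulator_iff_of_strictMono {φ : ℝ → ℝ → ℝ}
    (hφ : ∀ t, 0 ≤ t → StrictMono (φ t)) {z a b z' a' b' k : ℝ → ℝ}
    (hz : ∀ t, 0 ≤ t → φ t (z t) = z' t) (ha : ∀ t, 0 ≤ t → φ t (a t) = a' t)
    (hb : ∀ t, 0 ≤ t → φ t (b t) = b' t) :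
    IsMinimalRegulator z' a' b' k ↔ IsMinimalRegulator z a b k := by
  have hlower : ∀ t, 0 ≤ t → (a' t < z' t ↔ a t < z t) := fun t ht => by
    rw [← ha t ht, ← hz t ht, (hφ t ht).lt_iff_lt]
  have hupper : ∀ t, 0 ≤ t → (z' t < b' t ↔ z t < b t) := fun t ht => by
    rw [← hz t ht, ← hb t ht, (hφ t ht).lt_iff_lt]
  have hband : ∀ t, 0 ≤ t → (z' t ∈ Icc (a' t) (b' t) ↔ z t ∈ Icc (a t) (b t)) := fun t ht => by
    rw [← ha t ht, ← hz t ht, ← hb t ht, mem_Icc, (hφ t ht).le_iff_le, (hφ t ht).le_iff_le, mem_Icc]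
  refine and_congr (forall₂_congr hband) (and_congr (forall₄_congr fun t q ht _ => ?_)
    (forall₂_congr fun t ht => ?_))
  · exact and_congr
      (imp_congr_left (forall₃_congr fun s hts _ => hupper s (ht.trans hts.le)))
      (imp_congr_left (forall₃_congr fun s hts _ => hlower s (ht.trans hts.le)))
  · exact and_congr (imp_congr_left (hupper t ht.le)) (imp_congr_left (hlower t ht.le))

theorem detSP_iff {y lb ub x k : ℝ → ℝ} :
    DetSP y lb ub x k ↔ CadlagOn x ∧ CadlagOn k ∧ k 0 = 0 ∧
      (∀ t, 0 ≤ t → x t = y t + k t) ∧ IsMinimalRegulator x lb ub k := by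
  simp only [DetSP, IsMinimalRegulator, forall₂_and, and_assoc]

section MeanProblem

variable {Ω : Type*} [MeasurableSpace Ω] {μ : Measure Ω} {h : ℝ → ℝ → ℝ} {Y : ℝ → Ω → ℝ}

/-- The mean of `h(t, ·)` at `Y_t` recentred to the value `z`: the paper's
`E[h(t, Y_t - E[Y_t] + z)]`, as a function of `t` and `z`. -/
def recentredMean (μ : Measure Ω) (h : ℝ → ℝ → ℝ) (Y : ℝ → Ω → ℝ) (t z : ℝ) : ℝ :=
  ∫ ω, h t (Y t ω - (∫ ω', Y t ω' ∂μ) + z) ∂μ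

theorem recentredMean_strictMono [NeZero μ] {t : ℝ} (hmono : StrictMono (h t))
    (hint : ∀ c, Integrable (fun ω => h t (Y t ω + c)) μ) :
    StrictMono (recentredMean μ h Y t) := by
  refine strictMono_integral (fun z => ?_)
    (Eventually.of_forall fun ω => hmono.comp (add_right_strictMono (a := Y t ω - _)))
  simpa only [sub_add_eq_add_sub, add_sub_assoc] using hint (z - ∫ ω', Y t ω' ∂μ)

theorem recentredMean_mean_add (t c : ℝ) :
    recentredMean μ h Y t ((∫ ω, Y t ω ∂μ) + c) = ∫ ω, h t (Y t ω + c) ∂μ := by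
  simp only [recentredMean, ← add_assoc, sub_add_cancel]

theorem stmt_7_general [IsFiniteMeasure μ] [NeZero μ]
    (hmono : ∀ t, 0 ≤ t → StrictMono (h t))
    (hint : ∀ t, 0 ≤ t → ∀ c, Integrable (fun ω => h t (Y t ω + c)) μ)
    (hY : NiceProcess μ Y) {l u lbar ubar : ℝ → ℝ}
    (hlbar : ∀ t, 0 ≤ t → recentredMean μ h Y t (lbar t) = l t)
    (hubar : ∀ t, 0 ≤ t → recentredMean μ h Y t (ubar t) = u t)
    {k : ℝ → ℝ} {X : ℝ → Ω → ℝ} (hX : ∀ t, 0 ≤ t → ∀ ω, X t ω = Y t ω + k t)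
    {x : ℝ → ℝ} (hx : ∀ t, 0 ≤ t → x t = (∫ ω, Y t ω ∂μ) + k t) :
    MeanSP μ h Y l u X k ↔ DetSP (fun t => ∫ ω, Y t ω ∂μ) lbar ubar x k := by
  have hmean : ∀ t, 0 ≤ t → recentredMean μ h Y t (x t) = ∫ ω, h t (X t ω) ∂μ := fun t ht => by
    simp only [hx t ht, recentredMean_mean_add, hX t ht]
  have hreg : IsMinimalRegulator (fun t => ∫ ω, h t (X t ω) ∂μ) l u k ↔
      IsMinimalRegulator x lbar ubar k :=
    isMinimalRegulator_iff_of_strictMono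
      (fun t ht => recentredMean_strictMono (hmono t ht) (hint t ht)) hmean hlbar hubar
  rw [detSP_iff]
  constructor
  · rintro ⟨-, hk, hk0, -, hXreg⟩
    have hy : CadlagOn fun t => ∫ ω, Y t ω ∂μ :=
      cadlagOn_integral (Eventually.of_forall hY.cadlag) hY.unifInt
    exact ⟨(hy.add hk).congr hx, hk, hk0, hx, hreg.1 hXreg⟩
  · rintro ⟨-, hk, hk0, -, hxreg⟩
    exact ⟨fun ω => ((hY.cadlag ω).add hk).congr fun t ht => hX t ht ω, hk, hk0, hX,
      hreg.2 hxreg⟩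

end MeanProblem

/-- `(X, k)` solves the mean Skorokhod problem for `(h, Y, l, u)` iff
`(x, k)`, with `x_t = E[Y_t] + k_t`, solves the deterministic Skorokhod problem
`SP_{l̄}^{ū}(y)` with `y_t = E[Y_t]`. -/
theorem stmt_7 {Ω : Type*} [MeasurableSpace Ω] (μ : Measure Ω) [IsProbabilityMeasure μ]
    (h : ℝ → ℝ → ℝ) (Mh Lh ch Ch : ℝ) (hH : CondH h Mh Lh ch Ch)
    (Y : ℝ → Ω → ℝ) (hY : NiceProcess μ Y)
    (l u : ℝ → ℝ) (hl : CadlagOn l) (hu : CadlagOn u)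
    (hlu : ∀ t : ℝ, 0 ≤ t → l t ≤ u t)
    (h0 : (∫ ω, h 0 (Y 0 ω) ∂μ) ∈ Set.Icc (l 0) (u 0))
    (lbar ubar : ℝ → ℝ)
    (hlbar : ∀ t : ℝ, 0 ≤ t → (∫ ω, h t (Y t ω - (∫ ω', Y t ω' ∂μ) + lbar t) ∂μ) = l t)
    (hubar : ∀ t : ℝ, 0 ≤ t → (∫ ω, h t (Y t ω - (∫ ω', Y t ω' ∂μ) + ubar t) ∂μ) = u t)
    (k : ℝ → ℝ) (hk : CadlagOn k) (hk0 : k 0 = 0)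
    (X : ℝ → Ω → ℝ) (hX : ∀ t : ℝ, 0 ≤ t → ∀ ω, X t ω = Y t ω + k t)
    (x : ℝ → ℝ) (hx : ∀ t : ℝ, 0 ≤ t → x t = (∫ ω, Y t ω ∂μ) + k t) :
    MeanSP μ h Y l u X k ↔ DetSP (fun t => ∫ ω, Y t ω ∂μ) lbar ubar x k :=
  stmt_7_general hH.strict_mono
    (fun t ht c => hH.integrable_comp ht ((hY.integrable t ht).add (integrable_const c)))
    hY hlbar hubar hX hx
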